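/- Let a > 0, h > 0 and l ∈ ℝ. Then 1 - a h ∫₀^a J₁(h ρ)/√(a² - ρ²) dρ + l ∫₀^a ρ J₀(h ρ)/√(a² - ρ²) dρ = cos(h a) + (l/h) sin(h a), where J₀(x) = (1/π)∫₀^π cos(x sin θ) dθ and J₁(x) = (1/π)∫₀^π cos(θ - x sin θ) dθ are the Bessel functions of the first kind of orders 0 and 1. -/

import Mathlib

open Real MeasureTheory intervalIntegral

/-- Bessel function of the first kind of order 0,
`J₀(x) = (1/π) ∫₀^π cos(x sin θ) dθ`. -/
noncomputable def besselJ0 (x : ℝ) : ℝ :=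
  (1 / Real.pi) * ∫ θ in (0 : ℝ)..Real.pi, Real.cos (x * Real.sin θ)

/-- Bessel function of the first kind of order 1,
`J₁(x) = (1/π) ∫₀^π cos(θ - x sin θ) dθ`. -/
noncomputable def besselJ1 (x : ℝ) : ℝ :=
  (1 / Real.pi) * ∫ θ in (0 : ℝ)..Real.pi, Real.cos (θ - x * Real.sin θ)

theorem aux_L (c : ℕ → ℝ) (e : ℕ → ℕ) (f : ℝ → ℝ) (hf : ∀ y, HasSum (fun k => c k * y ^ (e k)) (f y))
    (m : ℕ) (B x : ℝ) :
    HasSum (fun k => (c k * x ^ (e k)) * ∫ θ in (0:ℝ)..B, sin θ ^ (e k + m))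
      (∫ θ in (0:ℝ)..B, sin θ ^ m * f (x * sin θ)) := by
  have key := intervalIntegral.hasSum_integral_of_dominated_convergence (μ := volume)
    (a := 0) (b := B)
    (F := fun k θ => (c k * x ^ (e k)) * sin θ ^ (e k + m))
    (f := fun θ => sin θ ^ m * f (x * sin θ))
    (fun k _ => |c k * x ^ (e k)|) ?_ ?_ ?_ ?_ ?_
  · simpa only [intervalIntegral.integral_const_mul] using key
  · intro n
    exact (Continuous.aestronglyMeasurable (by fun_prop))
  · intro n
    refine Filter.Eventually.of_forall fun t _ => ?_
    rw [norm_mul, norm_pow, Real.norm_eq_abs, Real.norm_eq_abs]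
    exact mul_le_of_le_one_right (abs_nonneg _) (pow_le_one₀ (abs_nonneg _) (abs_sin_le_one t))
  · exact Filter.Eventually.of_forall fun t _ => (hf x).summable.abs
  · exact intervalIntegrable_const
  · refine Filter.Eventually.of_forall fun t _ => ?_
    have := (hf (x * sin t)).mul_left (sin t ^ m)
    refine this.congr_fun ?_
    intro k
    ring

theorem aux_W (k : ℕ) : (∫ θ in (0:ℝ)..π, sin θ ^ (2*k)) * (∫ θ in (0:ℝ)..(π/2), sin θ ^ (2*k+1))
    = π / (2*k+1) := by
  induction k with
  | zero => simp
  | succ k ih =>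
    have h1 := integral_sin_pow (a := 0) (b := π) (2*k)
    have h2 := integral_sin_pow (a := 0) (b := π/2) (2*k+1)
    rw [show 2*(k+1) = 2*k+2 by ring, h1, show 2*k+2+1 = 2*k+1+2 by ring, h2]
    simp only [sin_zero, sin_pi, cos_pi_div_two]
    push_cast
    simp only [ne_eq, Nat.add_eq_zero_iff, one_ne_zero, and_false, not_false_eq_true, zero_pow]
    rw [mul_comm] at ih
    rw [eq_div_iff (by positivity)] at ih ⊢
    field_simp
    linear_combination (2*(k:ℝ)+3) * (2*k+2) * ih

theorem aux_W' (k : ℕ) : (∫ θ in (0:ℝ)..π, sin θ ^ (2*k+2)) * (∫ θ in (0:ℝ)..(π/2), sin θ ^ (2*k+1))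
    = π / (2*k+2) := by
  have h1 := integral_sin_pow (a := 0) (b := π) (2*k)
  have ih := aux_W k
  rw [h1]
  simp only [sin_zero, sin_pi]
  push_cast
  simp only [ne_eq, Nat.add_eq_zero_iff, one_ne_zero, and_false, not_false_eq_true, zero_pow]
  rw [eq_div_iff (by positivity)] at ih ⊢
  field_simp
  linear_combination ih

theorem aux_sub (a : ℝ) (ha : 0 < a) (G : ℝ → ℝ) :
    ∫ ρ in (0:ℝ)..a, G ρ / √(a^2 - ρ^2) = ∫ φ in (0:ℝ)..(π/2), G (a * sin φ) := by
  have himg : (fun φ => a * sin φ) '' (Set.Ioo 0 (π/2)) = Set.Ioo 0 a := by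
    ext y
    constructor
    · rintro ⟨φ, ⟨h0, h1⟩, rfl⟩
      have hs : 0 < sin φ := sin_pos_of_pos_of_lt_pi h0 (by linarith [pi_pos])
      have hs1 : sin φ < sin (π/2) := sin_lt_sin_of_lt_of_le_pi_div_two (by linarith [pi_pos]) le_rfl h1
      rw [sin_pi_div_two] at hs1
      exact ⟨by positivity, by nlinarith⟩
    · rintro ⟨h0, h1⟩
      refine ⟨arcsin (y/a), ⟨arcsin_pos.2 (by positivity), arcsin_lt_pi_div_two.2 ((div_lt_one ha).2 h1)⟩, ?_⟩
      have : 0 < y / a := by positivity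
      have h2 := (div_lt_one ha).2 h1
      simp only
      rw [sin_arcsin (by linarith) h2.le]
      field_simp
  rw [intervalIntegral.integral_of_le ha.le, intervalIntegral.integral_of_le (by positivity),
    integral_Ioc_eq_integral_Ioo, integral_Ioc_eq_integral_Ioo, ← himg,
    integral_image_eq_integral_abs_deriv_smul measurableSet_Ioo
      (f' := fun φ => a * cos φ) (fun x _ => ((hasDerivAt_sin x).const_mul a).hasDerivWithinAt)]
  · refine setIntegral_congr_fun measurableSet_Ioo fun φ hφ => ?_
    have hc : 0 < cos φ := cos_pos_of_mem_Ioo ⟨by linarith [hφ.1, pi_pos], hφ.2⟩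
    have hac : 0 < a * cos φ := by positivity
    have : a^2 - (a * sin φ)^2 = (a * cos φ)^2 := by
      linear_combination (-a^2) * (sin_sq_add_cos_sq φ)
    simp only [smul_eq_mul]
    rw [this, sqrt_sq hac.le, abs_of_pos hac]
    field_simp
  · intro x hx y hy hxy
    exact injOn_sin ⟨by linarith [hx.1, pi_pos], hx.2.le⟩ ⟨by linarith [hy.1, pi_pos], hy.2.le⟩
      (mul_left_cancel₀ ha.ne' hxy)

theorem aux_J0 (x : ℝ) : HasSum (fun k : ℕ => ((-1)^k / (2*k).factorial *
    (∫ θ in (0:ℝ)..π, sin θ ^ (2*k)) / π) * x^(2*k)) (besselJ0 x) := by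
  have h := aux_L (fun k => (-1)^k / (2*k).factorial) (fun k => 2*k) cos
    (fun y => by
      refine (Real.hasSum_cos y).congr_fun fun k => ?_
      ring) 0 π x
  have h2 := h.mul_left (1/π)
  simp only [pow_zero, one_mul, add_zero] at h2
  refine h2.congr_fun fun k => ?_
  ring

theorem aux_J1' (x : ℝ) : besselJ1 x = (1/π) * ∫ θ in (0:ℝ)..π, sin θ ^ 1 * sin (x * sin θ) := by
  unfold besselJ1
  have hz : ∫ θ in (0:ℝ)..π, cos θ * cos (x * sin θ) = 0 := by
    have := intervalIntegral.integral_comp_sub_left (a := 0) (b := π)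
      (fun θ => cos θ * cos (x * sin θ)) π
    simp only [cos_pi_sub, sin_pi_sub, sub_self, sub_zero, neg_mul,
      intervalIntegral.integral_neg] at this
    linarith
  congr 1
  simp only [cos_sub]
  rw [intervalIntegral.integral_add (Continuous.intervalIntegrable (by fun_prop) _ _)
    (Continuous.intervalIntegrable (by fun_prop) _ _), hz]
  simp

theorem aux_J1 (x : ℝ) : HasSum (fun k : ℕ => ((-1)^k / (2*k+1).factorial *
    (∫ θ in (0:ℝ)..π, sin θ ^ (2*k+2)) / π) * x^(2*k+1)) (besselJ1 x) := by
  have h := aux_L (fun k => (-1)^k / (2*k+1).factorial) (fun k => 2*k+1) sin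
    (fun y => by
      refine (Real.hasSum_sin y).congr_fun fun k => ?_
      ring) 1 π x
  have h2 := h.mul_left (1/π)
  rw [aux_J1']
  refine h2.congr_fun fun k => ?_
  ring

theorem aux_A (z : ℝ) : z * ∫ φ in (0:ℝ)..(π/2), sin φ ^ 1 * besselJ0 (z * sin φ) = sin z := by
  have h := (aux_L _ _ _ aux_J0 1 (π/2) z).mul_left z
  refine h.unique ((Real.hasSum_sin z).congr_fun fun k => ?_)
  have hw := aux_W k
  rw [eq_div_iff (by positivity)] at hw
  rw [Nat.factorial_succ]
  push_cast
  have : ((2*k).factorial : ℝ) ≠ 0 := by positivity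
  field_simp
  linear_combination (z^(2*k+1)) * hw

theorem aux_B (z : ℝ) : z * ∫ φ in (0:ℝ)..(π/2), sin φ ^ 0 * besselJ1 (z * sin φ) = 1 - cos z := by
  have h := (aux_L _ _ _ aux_J1 0 (π/2) z).mul_left z
  have hc := ((hasSum_nat_add_iff' 1).2 (Real.hasSum_cos z)).neg
  simp only [Finset.sum_range_one, mul_zero, pow_zero, Nat.factorial_zero, Nat.cast_one, neg_sub,
    div_one, one_mul] at hc
  refine h.unique (hc.congr_fun fun k => ?_)
  have hw := aux_W' k
  rw [eq_div_iff (by positivity)] at hw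
  rw [show 2*(k+1) = 2*k+1+1 by ring, Nat.factorial_succ (2*k+1)]
  push_cast
  have : ((2*k+1).factorial : ℝ) ≠ 0 := by positivity
  simp only [add_zero]
  field_simp
  linear_combination ((-1)^k * z^(2*k+2)) * hw

/-- Fourier transform of the static complex point source:
`1 - a h ∫₀^a J₁(hρ)/√(a²-ρ²) dρ + l ∫₀^a ρ J₀(hρ)/√(a²-ρ²) dρ
  = cos(ha) + (l/h) sin(ha)`. -/
theorem statement13 (a h l : ℝ) (ha : 0 < a) (hh : 0 < h) :
    1 - a * h * (∫ ρ in (0 : ℝ)..a, besselJ1 (h * ρ) / Real.sqrt (a ^ 2 - ρ ^ 2))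
      + l * (∫ ρ in (0 : ℝ)..a, ρ * besselJ0 (h * ρ) / Real.sqrt (a ^ 2 - ρ ^ 2)) =
    Real.cos (h * a) + (l / h) * Real.sin (h * a) := by
  have hA := aux_A (h * a)
  have hB := aux_B (h * a)
  rw [aux_sub a ha (fun ρ => besselJ1 (h * ρ)), aux_sub a ha (fun ρ => ρ * besselJ0 (h * ρ))]
  simp only [pow_zero, pow_one, one_mul] at hA hB
  simp only [← mul_assoc]
  simp only [mul_assoc a, intervalIntegral.integral_const_mul]
  have hne := hh.ne'
  rw [← hA]
  generalize (∫ φ in (0:ℝ)..(π/2), sin φ * besselJ0 (h * a * sin φ)) = I0 at *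
  generalize (∫ φ in (0:ℝ)..(π/2), besselJ1 (h * a * sin φ)) = I1 at *
  generalize cos (h * a) = C at *
  field_simp
  linear_combination -hB
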